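/- arXiv:1004.2574 — 7 statements merged into one kernel-verified Lean document; each statement's English description precedes it below -/
import Mathlib

section
/- Fix a natural number k ≥ 1. For every ρ > 0 and every c : Fin k → ℝ there exists a unique function r : Fin (k+1) → ℝ such that r m > 0 for every m, (r i)² − (r (i+1))² = c i for every i ∈ Fin k, and Π_m r m = ρ. (This determines the moduli of the points of the lagrangian level-set torus S^a_{(c_1,…,c_k)} in the fiber ψ^{-1}(a) with |a| = ρ.) -/
noncomputable section

/-!
The difference equations say that the squares of the `r m` form a family `t - a m`, where the
`a m` are the partial sums of `c` and only `t` is free. The product condition becomes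
`∏ m, (t - a m) = ρ ^ 2`, and a monic real-rooted polynomial increases strictly from `0` to
infinity to the right of its largest root, so it takes each positive value there exactly once.
-/

theorem strictMonoOn_prod_sub {ι R : Type*} [Fintype ι] [Nonempty ι] [CommRing R] [PartialOrder R]
    [IsStrictOrderedRing R] (a : ι → R) :
    StrictMonoOn (fun t => ∏ m, (t - a m)) {t | ∀ m, a m < t} := fun _ hs _ _ hst =>
  Finset.prod_lt_prod_of_nonempty (fun m _ => sub_pos.mpr (hs m))
    (fun m _ => sub_lt_sub_right hst (a m)) Finset.univ_nonempty

theorem exists_forall_lt_and_prod_sub_eq {ι : Type*} [Fintype ι] [Nonempty ι] (a : ι → ℝ) {σ : ℝ}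
    (hσ : 0 < σ) : ∃ t, (∀ m, a m < t) ∧ ∏ m, (t - a m) = σ := by
  obtain ⟨m₀, hm₀⟩ := Finite.exists_max a
  have hcont : Continuous fun t : ℝ => ∏ m, (t - a m) := by fun_prop
  have hzero : ∏ m, (a m₀ - a m) = 0 :=
    Finset.prod_eq_zero (Finset.mem_univ m₀) (sub_self _)
  have hlarge : σ ≤ ∏ m, (a m₀ + (1 + σ) - a m) := calc
    σ ≤ 1 + σ := by linarith
    _ ≤ (1 + σ) ^ Fintype.card ι := le_self_pow₀ (by linarith) Fintype.card_ne_zero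
    _ = ∏ _m : ι, (1 + σ) := by rw [Finset.prod_const, Finset.card_univ]
    _ ≤ ∏ m, (a m₀ + (1 + σ) - a m) :=
      Finset.prod_le_prod (fun _ _ => by linarith) fun m _ => by linarith [hm₀ m]
  obtain ⟨t, ht, htσ⟩ := intermediate_value_Ioc (by linarith : a m₀ ≤ a m₀ + (1 + σ))
    hcont.continuousOn ⟨hzero.trans_lt hσ, hlarge⟩
  exact ⟨t, fun m => (hm₀ m).trans_lt ht.1, htσ⟩

theorem existsUnique_forall_lt_and_prod_sub_eq {ι : Type*} [Fintype ι] [Nonempty ι] (a : ι → ℝ)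
    {σ : ℝ} (hσ : 0 < σ) : ∃! t, (∀ m, a m < t) ∧ ∏ m, (t - a m) = σ := by
  obtain ⟨t, ht, htσ⟩ := exists_forall_lt_and_prod_sub_eq a hσ
  exact ⟨t, ⟨ht, htσ⟩, fun s ⟨hs, hsσ⟩ =>
    (strictMonoOn_prod_sub a).injOn hs ht (hsσ.trans htσ.symm)⟩

theorem castSucc_sub_succ_eq_iff_exists_eq_sub_partialSum {G : Type*} [AddCommGroup G] {k : ℕ}
    {x : Fin (k + 1) → G} {c : Fin k → G} :
    (∀ i : Fin k, x i.castSucc - x i.succ = c i) ↔ ∃ t, x = fun m => t - Fin.partialSum c m := by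
  constructor
  · refine fun hx => ⟨x 0, funext fun m => ?_⟩
    induction m using Fin.induction with
    | zero => rw [Fin.partialSum_zero, sub_zero]
    | succ i ih => rw [Fin.partialSum_succ, ← sub_sub, ← ih, ← hx i, sub_sub_cancel]
  · rintro ⟨t, rfl⟩ i
    rw [sub_sub_sub_cancel_left, Fin.partialSum_succ, add_sub_cancel_left]

theorem existsUnique_pos_castSucc_sub_succ_eq_prod_eq {k : ℕ} (c : Fin k → ℝ) {σ : ℝ}
    (hσ : 0 < σ) :
    ∃! x : Fin (k + 1) → ℝ, (∀ m, 0 < x m) ∧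
      (∀ i : Fin k, x i.castSucc - x i.succ = c i) ∧ ∏ m, x m = σ := by
  obtain ⟨t, ⟨ht, htσ⟩, huniq⟩ := existsUnique_forall_lt_and_prod_sub_eq (Fin.partialSum c) hσ
  refine ⟨fun m => t - Fin.partialSum c m,
    ⟨fun m => sub_pos.mpr (ht m),
      castSucc_sub_succ_eq_iff_exists_eq_sub_partialSum.mpr ⟨t, rfl⟩, htσ⟩, ?_⟩
  rintro x ⟨hpos, hdiff, hprod⟩
  obtain ⟨s, rfl⟩ := castSucc_sub_succ_eq_iff_exists_eq_sub_partialSum.mp hdiff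
  rw [huniq s ⟨fun m => sub_pos.mp (hpos m), hprod⟩]

/-- for every `ρ > 0` and every `c : Fin k → ℝ` there is a unique
`r : Fin (k+1) → ℝ` with all entries positive, satisfying `r_i² − r_{i+1}² = c_i`
for every `i` and `r_1 ⋯ r_{k+1} = ρ`.  (These are the moduli of the points of the
level-set torus `S^a_{(c_1,…,c_k)}` in the fiber `ψ⁻¹(a)`, `|a| = ρ`.) -/
theorem stmt_6 (k : ℕ) (hk : 1 ≤ k) (ρ : ℝ) (hρ : 0 < ρ) (c : Fin k → ℝ) :
    ∃! r : Fin (k + 1) → ℝ,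
      (∀ m, 0 < r m) ∧
        (∀ i : Fin k, (r i.castSucc) ^ 2 - (r i.succ) ^ 2 = c i) ∧
        (∏ m, r m) = ρ := by
  obtain ⟨x, ⟨hpos, hdiff, hprod⟩, huniq⟩ :=
    existsUnique_pos_castSucc_sub_succ_eq_prod_eq c (pow_pos hρ 2)
  refine ⟨fun m => √(x m), ⟨fun m => Real.sqrt_pos.mpr (hpos m), fun i => ?_, ?_⟩, ?_⟩
  · rw [Real.sq_sqrt (hpos _).le, Real.sq_sqrt (hpos _).le, hdiff]
  · rw [← Real.sqrt_prod _ fun m _ => (hpos m).le, hprod, Real.sqrt_sq hρ.le]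
  · rintro r ⟨hr, hrc, hrρ⟩
    have hsq : (fun m => r m ^ 2) = x :=
      huniq _ ⟨fun m => pow_pos (hr m) 2, hrc, by rw [Finset.prod_pow, hrρ]⟩
    funext m
    rw [← hsq, Real.sqrt_sq (hr m).le]
end
end

section
/- Fix a natural number k ≥ 1, a complex number a ≠ 0, and c : Fin k → ℝ. The set S^a_c = { z ∈ ℂ^{k+1} : Π_m z m = a and ‖z i‖² − ‖z (i+1)‖² = c i for every i ∈ Fin k }, equipped with the subspace topology, is nonempty and homeomorphic to the k-dimensional torus Fin k → Circle (the product of k copies of the unit circle). That is, each mutual level set of the functions F_1, …, F_k on a smooth fiber of ψ is a smooth lagrangian torus of the completely integrable system on that fiber. -/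
noncomputable section

/-- The level-set torus `S^a_c` in the fiber `ψ⁻¹(a)`: the mutual level set of the
functions `F_1, …, F_k` on that fiber. -/
def levelTorus (k : ℕ) (a : ℂ) (c : Fin k → ℝ) : Set (Fin (k + 1) → ℂ) :=
  { z | (∏ m, z m) = a ∧ ∀ i : Fin k, ‖z i.castSucc‖ ^ 2 - ‖z i.succ‖ ^ 2 = c i }

/-!
On the level set, the squared norms `‖z m‖²` are prescribed up to a common translation, and the
product of the translates is `‖a‖²`. A product of translates `t - d m` increases strictly from `0`
to `∞` once `t` exceeds every `d m`, so the norms are determined: they are the same at all points.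
What remains free are the phases of the coordinates, whose product must be the phase of `a`; all but
the first can be chosen arbitrarily, and they determine the first.
-/

lemma forall_castSucc_sub_succ_eq_iff {A : Type*} [AddCommGroup A] {k : ℕ} {x : Fin (k + 1) → A}
    {c : Fin k → A} :
    (∀ i, x i.castSucc - x i.succ = c i) ↔ ∃ t, ∀ m, x m = t - Fin.partialSum c m := by
  refine ⟨fun h => ⟨x 0, fun m => ?_⟩, ?_⟩
  · induction m using Fin.induction with
    | zero => simp
    | succ i ih => rw [Fin.partialSum_succ, ← sub_sub, ← ih, ← h, sub_sub_cancel]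
  · rintro ⟨t, ht⟩ i
    rw [ht, ht, Fin.partialSum_succ, sub_sub_sub_cancel_left, add_sub_cancel_left]

section ProdSub

variable {ι : Type*} [Fintype ι] [Nonempty ι]

lemma prod_sub_lt_prod_sub {d : ι → ℝ} {s t : ℝ} (hs : ∀ i, d i < s) (hst : s < t) :
    ∏ i, (s - d i) < ∏ i, (t - d i) :=
  Finset.prod_lt_prod_of_nonempty (fun i _ => sub_pos.2 (hs i))
    (fun i _ => sub_lt_sub_right hst (d i)) Finset.univ_nonempty

lemma exists_prod_sub_eq (d : ι → ℝ) {p : ℝ} (hp : 0 < p) :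
    ∃ t, (∀ i, d i < t) ∧ ∏ i, (t - d i) = p := by
  obtain ⟨j, hj⟩ := Finite.exists_max d
  have hlow : ∏ i, (d j - d i) = 0 := Finset.prod_eq_zero (Finset.mem_univ j) (sub_self _)
  have hhigh : p ≤ ∏ i, (d j + (p + 1) - d i) :=
    calc p ≤ p + 1 := by linarith
      _ ≤ (p + 1) ^ Fintype.card ι := le_self_pow₀ (by linarith) Fintype.card_ne_zero
      _ = ∏ _i : ι, (p + 1) := by rw [Finset.prod_const, Finset.card_univ]
      _ ≤ ∏ i, (d j + (p + 1) - d i) :=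
        Finset.prod_le_prod (fun _ _ => by linarith) fun i _ => by linarith [hj i]
  obtain ⟨t, ht, htp⟩ := intermediate_value_Ioc (f := fun t => ∏ i, (t - d i))
    (by linarith : d j ≤ d j + (p + 1)) (by fun_prop) ⟨hlow.trans_lt hp, hhigh⟩
  exact ⟨t, fun i => (hj i).trans_lt ht.1, htp⟩

lemma existsUnique_prod_sub_eq (d : ι → ℝ) {p : ℝ} (hp : 0 < p) :
    ∃! t, (∀ i, d i < t) ∧ ∏ i, (t - d i) = p := by
  refine existsUnique_of_exists_of_unique (exists_prod_sub_eq d hp) ?_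
  rintro s t ⟨hs, hsp⟩ ⟨ht, htp⟩
  rcases lt_trichotomy s t with hst | hst | hst
  · exact absurd (hsp.trans htp.symm) (prod_sub_lt_prod_sub hs hst).ne
  · exact hst
  · exact absurd (htp.trans hsp.symm) (prod_sub_lt_prod_sub ht hst).ne

end ProdSub

lemma existsUnique_radii_of_prod_of_sq_sub_sq {k : ℕ} (c : Fin k → ℝ) {p : ℝ} (hp : 0 < p) :
    ∃! r : Fin (k + 1) → ℝ, (∀ m, 0 < r m) ∧ ∏ m, r m = p ∧
      ∀ i : Fin k, r i.castSucc ^ 2 - r i.succ ^ 2 = c i := by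
  obtain ⟨t, ⟨ht, htp⟩, ht_unique⟩ := existsUnique_prod_sub_eq (Fin.partialSum c) (pow_pos hp 2)
  have hsq (m) : √(t - Fin.partialSum c m) ^ 2 = t - Fin.partialSum c m :=
    Real.sq_sqrt (sub_nonneg.2 (ht m).le)
  refine ⟨fun m => √(t - Fin.partialSum c m),
    ⟨fun m => Real.sqrt_pos.2 (sub_pos.2 (ht m)), ?_,
      (forall_castSucc_sub_succ_eq_iff (x := fun m => _ ^ 2)).2 ⟨t, hsq⟩⟩, ?_⟩
  · rw [← Real.sqrt_prod _ fun m _ => sub_nonneg.2 (ht m).le, htp, Real.sqrt_sq hp.le]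
  · rintro s ⟨hs, hsp, hsc⟩
    obtain ⟨t', ht'⟩ := (forall_castSucc_sub_succ_eq_iff (x := fun m => s m ^ 2)).1 hsc
    have hprod : ∏ m, (t' - Fin.partialSum c m) = p ^ 2 := by
      simp only [← ht', Finset.prod_pow, hsp]
    obtain rfl : t' = t :=
      ht_unique t' ⟨fun m => sub_pos.1 (ht' m ▸ pow_pos (hs m) 2), hprod⟩
    funext m
    rw [← ht', Real.sqrt_sq (hs m).le]

/-- The points of `ℂ^ι` whose coordinates have norms `r` and product `a`: the form that the level
sets `levelTorus k a c` take once the norms are known. -/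
def normProdFiber {ι : Type*} [Fintype ι] (r : ι → ℝ) (a : ℂ) : Set (ι → ℂ) :=
  {z | ∏ i, z i = a ∧ ∀ i, ‖z i‖ = r i}

lemma exists_levelTorus_eq_normProdFiber {k : ℕ} {a : ℂ} (ha : a ≠ 0) (c : Fin k → ℝ) :
    ∃ r : Fin (k + 1) → ℝ, (∀ m, 0 < r m) ∧ ∏ m, r m = ‖a‖ ∧
      levelTorus k a c = normProdFiber r a := by
  obtain ⟨r, ⟨hr, hprod, hc⟩, hr_unique⟩ :=
    existsUnique_radii_of_prod_of_sq_sub_sq c (norm_pos_iff.2 ha)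
  refine ⟨r, hr, hprod, Set.ext fun z => and_congr_right fun hz => ⟨fun h => ?_, fun h i => ?_⟩⟩
  · have hz_ne (m) : z m ≠ 0 := Finset.prod_ne_zero_iff.1 (hz ▸ ha) m (Finset.mem_univ m)
    exact congrFun (hr_unique (fun m => ‖z m‖)
      ⟨fun m => norm_pos_iff.2 (hz_ne m), by rw [← norm_prod, hz], h⟩)
  · rw [h, h, hc]

/-- The fiber over `b` of the product map `M^ι → M`. With `M = Circle` it is the space of phases of
the points of `normProdFiber r a`, where `b` is the phase of `a`. -/
def prodFiber (ι : Type*) [Fintype ι] {M : Type*} [CommMonoid M] (b : M) : Set (ι → M) :=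
  {g | ∏ i, g i = b}

lemma mul_circle_mem_normProdFiber_iff {ι : Type*} [Fintype ι] {r : ι → ℝ} (hr : ∀ i, 0 < r i)
    {a : ℂ} (ha : ∏ i, r i = ‖a‖) {u : ι → Circle} :
    (fun i => (r i * u i : ℂ)) ∈ normProdFiber r a ↔ u ∈ prodFiber ι (Circle.exp a.arg) := by
  have hnorm (i) : ‖(r i * u i : ℂ)‖ = r i := by
    rw [norm_mul, Circle.norm_coe, mul_one, Complex.norm_of_nonneg (hr i).le]
  have hprod : ∏ i, (r i * u i : ℂ) = ‖a‖ * (∏ i, u i : Circle) := by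
    rw [Finset.prod_mul_distrib, ← ha, Complex.ofReal_prod]
    exact congrArg _ (map_prod Circle.coeHom u Finset.univ).symm
  have ha_polar : a = ‖a‖ * Circle.exp a.arg := (Complex.norm_mul_exp_arg_mul_I a).symm
  have ha_norm : (‖a‖ : ℂ) ≠ 0 :=
    Complex.ofReal_ne_zero.2 (ha ▸ (Finset.prod_pos fun i _ => hr i).ne')
  calc (fun i => (r i * u i : ℂ)) ∈ normProdFiber r a
      ↔ ∏ i, (r i * u i : ℂ) = a := and_iff_left hnorm
    _ ↔ (‖a‖ * (∏ i, u i : Circle) : ℂ) = ‖a‖ * Circle.exp a.arg := by rw [hprod, ← ha_polar]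
    _ ↔ ∏ i, u i = Circle.exp a.arg := (mul_right_inj' ha_norm).trans Circle.coe_inj

/-- Sends a point of `normProdFiber r a` to the phases `z i / r i` of its coordinates. -/
def normProdFiberHomeomorph {ι : Type*} [Fintype ι] {r : ι → ℝ} (hr : ∀ i, 0 < r i) {a : ℂ}
    (ha : ∏ i, r i = ‖a‖) : normProdFiber r a ≃ₜ prodFiber ι (Circle.exp a.arg) :=
  have hr_ne (i : ι) : (r i : ℂ) ≠ 0 := Complex.ofReal_ne_zero.2 (hr i).ne'
  let phase (z : normProdFiber r a) (i : ι) : Circle :=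
    ⟨z.1 i / r i, mem_sphere_zero_iff_norm.2 <| by
      rw [norm_div, z.2.2, Complex.norm_of_nonneg (hr i).le, div_self (hr i).ne']⟩
  have mul_phase (z) : (fun i => (r i * phase z i : ℂ)) = z.1 :=
    funext fun i => mul_div_cancel₀ _ (hr_ne i)
  have continuous_phase : Continuous phase := continuous_pi fun i =>
    (((continuous_apply i).comp continuous_subtype_val).div_const _).subtype_mk _
  have continuous_mul_circle : Continuous fun (u : ι → Circle) i => (r i * u i : ℂ) := by fun_prop
  { toFun z := ⟨phase z, (mul_circle_mem_normProdFiber_iff hr ha).1 (mul_phase z ▸ z.2)⟩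
    invFun u := ⟨fun i => r i * u.1 i, (mul_circle_mem_normProdFiber_iff hr ha).2 u.2⟩
    left_inv z := Subtype.ext (mul_phase z)
    right_inv u := Subtype.ext <| funext fun i => Circle.ext <| mul_div_cancel_left₀ _ (hr_ne i)
    continuous_toFun := continuous_phase.subtype_mk _
    continuous_invFun := (continuous_mul_circle.comp continuous_subtype_val).subtype_mk _ }

/-- Forgets the first coordinate of a tuple with product `b`: it is determined by the others. -/
def prodFiberHomeomorph {G : Type*} [CommGroup G] [TopologicalSpace G] [IsTopologicalGroup G]
    (k : ℕ) (b : G) : prodFiber (Fin (k + 1)) b ≃ₜ (Fin k → G) where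
  toFun g := Fin.tail g.1
  invFun h := ⟨Fin.cons (b / ∏ i, h i) h, (Fin.prod_cons _ _).trans (div_mul_cancel _ _)⟩
  left_inv g := by
    have hg : b / ∏ i, Fin.tail g.1 i = g.1 0 :=
      div_eq_of_eq_mul' <| g.2.symm.trans <| (Fin.prod_univ_succ g.1).trans (mul_comm _ _)
    exact Subtype.ext <| (congrArg (Fin.cons · _) hg).trans (Fin.cons_self_tail g.1)
  right_inv h := Fin.tail_cons (α := fun _ => G) _ h
  continuous_toFun := by fun_prop
  continuous_invFun := by fun_prop

/-- for `a ≠ 0` and any `c`, the mutual level set `S^a_c`, with the subspace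
topology, is nonempty and homeomorphic to the `k`-dimensional torus `Fin k → Circle`. -/
theorem stmt_7 (k : ℕ) (hk : 1 ≤ k) (a : ℂ) (ha : a ≠ 0) (c : Fin k → ℝ) :
    (levelTorus k a c).Nonempty ∧
      Nonempty (↥(levelTorus k a c) ≃ₜ (Fin k → Circle)) := by
  obtain ⟨r, hr, hprod, hlevel⟩ := exists_levelTorus_eq_normProdFiber ha c
  let e : levelTorus k a c ≃ₜ (Fin k → Circle) :=
    (Homeomorph.setCongr hlevel).trans <|
      (normProdFiberHomeomorph hr hprod).trans (prodFiberHomeomorph k _)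
  exact ⟨⟨e.symm 1, (e.symm 1).2⟩, ⟨e⟩⟩
end
end

section
/- Fix a natural number k ≥ 1 and let z ∈ ℂ^{k+1} satisfy ψ(z) ≠ 0. Suppose v, w ∈ ℂ^{k+1} both lie in the kernel of the real Fréchet derivative of ψ at z and in the kernel of the real Fréchet derivative of F_i at z for every i ∈ Fin k. Then ω(v, w) = 0. That is, the tangent space at any point of a mutual level set { F_1 = c_1, …, F_k = c_k } inside a smooth fiber ψ^{-1}(a), a ≠ 0, is an isotropic (hence lagrangian in the fiber) subspace of the standard symplectic vector space ℂ^{k+1}. -/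
noncomputable section

/-- The standard symplectic form on `ℂ^n`: `ω(v, w) = Σ_m Im(conj (v m) * w m)`. -/
def omegaStd {n : ℕ} (v w : Fin n → ℂ) : ℝ :=
  ∑ m, ((starRingEnd ℂ) (v m) * w m).im

/-- The fibration `ψ(z) = z_1 ⋯ z_{k+1}`, viewed as a smooth map of real vector spaces. -/
def psiFib {k : ℕ} (z : Fin (k + 1) → ℂ) : ℂ := ∏ m, z m

/-- The commuting functions `F_i(z) = ‖z i‖² − ‖z (i+1)‖²`. -/
def Ffun {k : ℕ} (i : Fin k) (z : Fin (k + 1) → ℂ) : ℝ :=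
  ‖z i.castSucc‖ ^ 2 - ‖z i.succ‖ ^ 2

/-!
Write `⟪·, ·⟫` for the real inner product on `ℂ`. A vector `v` annihilated by every `d(F_i)_z` has
the same radial component `c = ⟪z m, v m⟫` in every coordinate, while `dψ_z v = 0` says
`∑ m, v m / z m = 0`, because `dψ / ψ` is the logarithmic differential `∑ m, dz m / z m`. The real
part of this sum is `c * ∑ m, 1 / ‖z m‖ ^ 2`, so `c = 0`. Hence each `v m` lies on the line
orthogonal to `z m`, and `ω` vanishes on a product of real lines, one in each factor of `ℂ^{k+1}`.
-/

open scoped InnerProductSpace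

theorem fderiv_finsetProd_apply_of_ne_zero {ι 𝕜 K : Type*} [Fintype ι]
    [NontriviallyNormedField 𝕜] [NormedField K] [NormedAlgebra 𝕜 K] {z : ι → K}
    (hz : ∀ m, z m ≠ 0) (v : ι → K) :
    fderiv 𝕜 (fun x : ι → K => ∏ m, x m) z v = (∏ m, z m) * ∑ m, v m / z m := by
  classical
  rw [hasFDerivAt_finsetProd.fderiv, sum_apply, Finset.mul_sum]
  refine Finset.sum_congr rfl fun m hm => ?_
  rw [smul_apply, ContinuousLinearMap.proj_apply, smul_eq_mul,
    eq_div_of_mul_eq (hz m) (Finset.prod_erase_mul Finset.univ z hm)]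
  exact (mul_comm_div _ _ _)

theorem fderiv_norm_sq_sub_norm_sq_apply {ι E : Type*} [Finite ι] [NormedAddCommGroup E]
    [InnerProductSpace ℝ E] (i j : ι) (z v : ι → E) :
    fderiv ℝ (fun x : ι → E => ‖x i‖ ^ 2 - ‖x j‖ ^ 2) z v =
      2 * (⟪z i, v i⟫_ℝ - ⟪z j, v j⟫_ℝ) := by
  cases nonempty_fintype ι
  have hasFDerivAt_norm_sq_apply (m : ι) := (hasFDerivAt_apply (𝕜 := ℝ) m z).norm_sq
  rw [((hasFDerivAt_norm_sq_apply i).fun_sub (hasFDerivAt_norm_sq_apply j)).fderiv]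
  simp [mul_sub]

theorem apply_eq_apply_zero_of_castSucc_eq_succ {k : ℕ} {α : Type*} {f : Fin (k + 1) → α}
    (h : ∀ i : Fin k, f i.castSucc = f i.succ) (m : Fin (k + 1)) : f m = f 0 := by
  induction m using Fin.induction with
  | zero => rfl
  | succ i ih => rw [← h i, ih]

theorem re_div_eq_inner_div_norm_sq (a b : ℂ) : (b / a).re = ⟪a, b⟫_ℝ / ‖a‖ ^ 2 := by
  rw [Complex.div_re, ← Complex.normSq_eq_norm_sq, Complex.inner, Complex.mul_re,
    Complex.conj_re, Complex.conj_im]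
  ring

theorem eq_zero_of_inner_eq_of_sum_div_eq_zero {ι : Type*} [Fintype ι] [Nonempty ι]
    {z v : ι → ℂ} {c : ℝ} (hz : ∀ m, z m ≠ 0) (hinner : ∀ m, ⟪z m, v m⟫_ℝ = c)
    (hsum : ∑ m, v m / z m = 0) : c = 0 := by
  have hpos : 0 < ∑ m, (‖z m‖ ^ 2)⁻¹ :=
    Finset.sum_pos (fun m _ => inv_pos.mpr (pow_pos (norm_pos_iff.mpr (hz m)) 2))
      Finset.univ_nonempty
  have hmul : c * ∑ m, (‖z m‖ ^ 2)⁻¹ = 0 :=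
    calc c * ∑ m, (‖z m‖ ^ 2)⁻¹ = (∑ m, v m / z m).re := by
          simp only [Complex.re_sum, re_div_eq_inner_div_norm_sq, hinner, Finset.mul_sum,
            ← div_eq_mul_inv]
      _ = 0 := by rw [hsum, Complex.zero_re]
  exact (mul_eq_zero.mp hmul).resolve_right hpos.ne'

theorem inner_eq_zero_of_fderiv_eq_zero {k : ℕ} {z v : Fin (k + 1) → ℂ} (hz : psiFib z ≠ 0)
    (hv : fderiv ℝ psiFib z v = 0) (hvF : ∀ i : Fin k, fderiv ℝ (Ffun i) z v = 0)
    (m : Fin (k + 1)) : ⟪z m, v m⟫_ℝ = 0 := by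
  have hz_apply (m : Fin (k + 1)) : z m ≠ 0 := Finset.prod_ne_zero_iff.mp hz m (Finset.mem_univ m)
  have hsum : ∑ m, v m / z m = 0 :=
    (mul_eq_zero.mp ((fderiv_finsetProd_apply_of_ne_zero hz_apply v).symm.trans hv)).resolve_left hz
  have hinner : ∀ m, ⟪z m, v m⟫_ℝ = ⟪z 0, v 0⟫_ℝ :=
    apply_eq_apply_zero_of_castSucc_eq_succ (f := fun m => ⟪z m, v m⟫_ℝ) fun i => by
      have hdiff := (fderiv_norm_sq_sub_norm_sq_apply i.castSucc i.succ z v).symm.trans (hvF i)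
      linarith
  rw [hinner m, eq_zero_of_inner_eq_of_sum_div_eq_zero hz_apply hinner hsum]

theorem areaForm_eq_zero_of_inner_eq_zero {E : Type*} [NormedAddCommGroup E]
    [InnerProductSpace ℝ E] [Fact (Module.finrank ℝ E = 2)] (o : Orientation ℝ E (Fin 2))
    {a x y : E} (ha : a ≠ 0) (hx : ⟪a, x⟫_ℝ = 0) (hy : ⟪a, y⟫_ℝ = 0) : o.areaForm x y = 0 := by
  have hmul : ‖a‖ ^ 2 * o.areaForm x y = 0 := by
    rw [← o.inner_mul_areaForm_sub, hx, hy, zero_mul, mul_zero, sub_zero]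
  exact (mul_eq_zero.mp hmul).resolve_left (pow_ne_zero 2 (norm_ne_zero_iff.mpr ha))

attribute [local instance] Complex.finrank_real_complex_fact

theorem omegaStd_eq_sum_areaForm {n : ℕ} (v w : Fin n → ℂ) :
    omegaStd v w = ∑ m, Complex.orientation.areaForm (v m) (w m) := by
  simp only [omegaStd, Complex.areaForm]

/-- at a point `z` of a smooth fiber (`ψ(z) ≠ 0`), any two vectors lying both
in the kernel of `dψ_z` and in the kernels of all `d(F_i)_z` are `ω`-orthogonal: the tangent
space to a mutual level set `{F_1 = c_1, …, F_k = c_k}` inside a smooth fiber is isotropic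
(hence lagrangian in the fiber). -/
theorem stmt_8 (k : ℕ) (hk : 1 ≤ k) (z : Fin (k + 1) → ℂ) (hz : psiFib z ≠ 0)
    (v w : Fin (k + 1) → ℂ)
    (hv : fderiv ℝ psiFib z v = 0) (hw : fderiv ℝ psiFib z w = 0)
    (hvF : ∀ i : Fin k, fderiv ℝ (Ffun i) z v = 0)
    (hwF : ∀ i : Fin k, fderiv ℝ (Ffun i) z w = 0) :
    omegaStd v w = 0 := by
  have hz_apply (m : Fin (k + 1)) : z m ≠ 0 := Finset.prod_ne_zero_iff.mp hz m (Finset.mem_univ m)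
  rw [omegaStd_eq_sum_areaForm]
  exact Finset.sum_eq_zero fun m _ =>
    areaForm_eq_zero_of_inner_eq_zero Complex.orientation (hz_apply m)
      (inner_eq_zero_of_fderiv_eq_zero hz hv hvF m) (inner_eq_zero_of_fderiv_eq_zero hz hw hwF m)
end
end

section
/- Fix a natural number k ≥ 1, let z ∈ ℂ^{k+1} satisfy ψ(z) ≠ 0, and let τ ∈ ℂ. Suppose v, w ∈ ℂ^{k+1} satisfy: the real Fréchet derivative of F_i at z vanishes on v and on w for every i ∈ Fin k, and there exist real numbers s, s' such that the real Fréchet derivative of ψ at z sends v to s·τ and w to s'·τ. Then ω(v, w) = 0. (This is the pointwise content of Proposition 1.1: for any couple (c_1,…,c_k) of non-critical values and any smooth loop γ ⊂ ℂ not passing through the origin, the torus S_{γ,(c_1,…,c_k)} = ⋃_{a ∈ γ} S^a_{(c_1,…,c_k)} — whose tangent space at z consists exactly of such vectors, with τ a tangent vector of γ at ψ(z) — is a lagrangian torus in ℂ^{k+1}.) -/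
noncomputable section

/-!
On the common kernel of the `dF_i` at `z` the real numbers `⟪z_m, v_m⟫` do not depend on `m`, and
this makes `dψ_z` conformally symplectic there:
`(∑_m |∂ψ/∂z_m|²) * ω(v, w) = Im (conj (dψ_z v) * dψ_z w)`.
Both sides are double sums over pairs of coordinates, and they agree after symmetrization, pair by
pair, which is the case of two coordinates. The right-hand side vanishes on vectors sent to a common
real line, and the factor on the left is positive wherever `dψ_z ≠ 0`.
-/

open scoped ComplexConjugate

theorem normSq_mul_im_conj_mul_add_eq {x y v v' w w' : ℂ}
    (hv : inner ℝ x v = inner ℝ y v') (hw : inner ℝ x w = inner ℝ y w') :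
    Complex.normSq x * (conj v * w).im + Complex.normSq y * (conj v' * w').im =
      (conj (x * v') * (y * w)).im + (conj (y * v) * (x * w')).im := by
  simp only [Complex.inner, Complex.mul_re, Complex.mul_im, Complex.conj_re, Complex.conj_im,
    Complex.normSq_apply] at hv hw ⊢
  -- The difference of the sides is
  -- `(⟪x, v⟫ - ⟪y, v'⟫) * Im (conj x * w - conj y * w')` minus the same
  -- with `v`, `v'` and `w`, `w'` exchanged.
  linear_combination
    hv * (x.re * w.im - x.im * w.re - (y.re * w'.im - y.im * w'.re)) -
      hw * (x.re * v.im - x.im * v.re - (y.re * v'.im - y.im * v'.re))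

theorem sum_sum_eq_sum_sum_of_add_swap_eq {ι M : Type*} [AddCommMonoid M] [IsAddTorsionFree M]
    {s : Finset ι} {f g : ι → ι → M}
    (h : ∀ m ∈ s, ∀ n ∈ s, f m n + f n m = g m n + g n m) :
    ∑ m ∈ s, ∑ n ∈ s, f m n = ∑ m ∈ s, ∑ n ∈ s, g m n := by
  have sum_add_swap (f : ι → ι → M) :
      ∑ m ∈ s, ∑ n ∈ s, (f m n + f n m) = 2 • ∑ m ∈ s, ∑ n ∈ s, f m n := by
    simp only [Finset.sum_add_distrib]
    rw [Finset.sum_comm (f := fun m n => f n m), two_nsmul]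
  refine nsmul_right_injective two_ne_zero ?_
  simp only [← sum_add_swap]
  exact Finset.sum_congr rfl fun m hm => Finset.sum_congr rfl (h m hm)

section ProdErase

variable {ι : Type*} [DecidableEq ι] {s : Finset ι} {z v w : ι → ℂ} {a b : ℝ}

theorem normSq_prod_erase_mul_im_conj_mul_add_eq
    (hv : ∀ m ∈ s, inner ℝ (z m) (v m) = a) (hw : ∀ m ∈ s, inner ℝ (z m) (w m) = b)
    {m n : ι} (hm : m ∈ s) (hn : n ∈ s) :
    Complex.normSq (∏ j ∈ s.erase m, z j) * (conj (v n) * w n).im +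
        Complex.normSq (∏ j ∈ s.erase n, z j) * (conj (v m) * w m).im =
      (conj ((∏ j ∈ s.erase m, z j) * v m) * ((∏ j ∈ s.erase n, z j) * w n)).im +
        (conj ((∏ j ∈ s.erase n, z j) * v n) * ((∏ j ∈ s.erase m, z j) * w m)).im := by
  have conj_mul_mul_im (q p p' : ℂ) :
      (conj (q * p) * (q * p')).im = Complex.normSq q * (conj p * p').im := by
    rw [map_mul, mul_mul_mul_comm, ← Complex.normSq_eq_conj_mul_self, Complex.im_ofReal_mul]
  obtain rfl | hmn := eq_or_ne m n
  · simp only [conj_mul_mul_im]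
  · set q := ∏ j ∈ (s.erase m).erase n, z j with hq
    have hPm : ∏ j ∈ s.erase m, z j = q * z n :=
      (Finset.prod_erase_mul _ _ (Finset.mem_erase.mpr ⟨hmn.symm, hn⟩)).symm
    have hPn : ∏ j ∈ s.erase n, z j = q * z m := by
      rw [hq, Finset.erase_right_comm,
        Finset.prod_erase_mul _ _ (Finset.mem_erase.mpr ⟨hmn, hm⟩)]
    have hpair := normSq_mul_im_conj_mul_add_eq ((hv n hn).trans (hv m hm).symm)
      ((hw n hn).trans (hw m hm).symm)
    simp only [hPm, hPn, mul_assoc, conj_mul_mul_im, map_mul Complex.normSq]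
    linear_combination Complex.normSq q * hpair

theorem sum_normSq_prod_erase_mul_sum_im_conj_mul
    (hv : ∀ m ∈ s, inner ℝ (z m) (v m) = a) (hw : ∀ m ∈ s, inner ℝ (z m) (w m) = b) :
    (∑ m ∈ s, Complex.normSq (∏ j ∈ s.erase m, z j)) * ∑ m ∈ s, (conj (v m) * w m).im =
      (conj (∑ m ∈ s, (∏ j ∈ s.erase m, z j) * v m) *
        ∑ m ∈ s, (∏ j ∈ s.erase m, z j) * w m).im := by
  rw [map_sum, Finset.sum_mul_sum, Finset.sum_mul_sum]
  simp only [Complex.im_sum]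
  exact sum_sum_eq_sum_sum_of_add_swap_eq fun m hm n hn =>
    normSq_prod_erase_mul_im_conj_mul_add_eq hv hw hm hn

end ProdErase

section Fibration

variable {k : ℕ} {z v w : Fin (k + 1) → ℂ}

theorem fderiv_Ffun_apply (i : Fin k) (z v : Fin (k + 1) → ℂ) :
    fderiv ℝ (Ffun i) z v =
      2 * inner ℝ (z i.castSucc) (v i.castSucc) - 2 * inner ℝ (z i.succ) (v i.succ) := by
  have h (m : Fin (k + 1)) :=
    (hasFDerivAt_apply (𝕜 := ℝ) (F' := fun _ : Fin (k + 1) => ℂ) m z).norm_sq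
  have hF : HasFDerivAt (Ffun i) _ z := (h i.castSucc).sub (h i.succ)
  rw [hF.fderiv]
  simp only [sub_apply, smul_apply, ContinuousLinearMap.comp_apply,
    ContinuousLinearMap.proj_apply, coe_innerSL_apply, nsmul_eq_mul, Nat.cast_ofNat]

theorem inner_eq_inner_zero_of_fderiv_Ffun_eq_zero
    (h : ∀ i : Fin k, fderiv ℝ (Ffun i) z v = 0) (m : Fin (k + 1)) :
    inner ℝ (z m) (v m) = inner ℝ (z 0) (v 0) := by
  induction m using Fin.induction with
  | zero => rfl
  | succ i ih =>
    have hi := h i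
    rw [fderiv_Ffun_apply] at hi
    linarith

theorem fderiv_psiFib_apply (z v : Fin (k + 1) → ℂ) :
    fderiv ℝ psiFib z v = ∑ m, (∏ j ∈ Finset.univ.erase m, z j) * v m := by
  have hψ : HasFDerivAt (psiFib (k := k)) _ z :=
    hasFDerivAt_finsetProd (𝕜 := ℝ) (u := Finset.univ) (x := z)
  simp only [hψ.fderiv, sum_apply, smul_apply, ContinuousLinearMap.proj_apply, smul_eq_mul]

theorem fderiv_psiFib_apply_self (z : Fin (k + 1) → ℂ) :
    fderiv ℝ psiFib z z = (k + 1) * psiFib z := by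
  simp [fderiv_psiFib_apply, psiFib, Finset.prod_erase_mul]

theorem fderiv_psiFib_ne_zero (hz : psiFib z ≠ 0) : fderiv ℝ psiFib z ≠ 0 := by
  intro h
  have heuler := fderiv_psiFib_apply_self z
  rw [h, zero_apply] at heuler
  exact mul_ne_zero (Nat.cast_add_one_ne_zero k) hz heuler.symm

theorem sum_normSq_prod_erase_pos (hz : fderiv ℝ psiFib z ≠ 0) :
    0 < ∑ m, Complex.normSq (∏ j ∈ Finset.univ.erase m, z j) := by
  have hpartial : ∃ m, ∏ j ∈ Finset.univ.erase m, z j ≠ 0 := by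
    contrapose! hz
    ext v
    simp [fderiv_psiFib_apply, hz]
  obtain ⟨m, hm⟩ := hpartial
  exact Finset.sum_pos' (fun _ _ => Complex.normSq_nonneg _)
    ⟨m, Finset.mem_univ m, Complex.normSq_pos.mpr hm⟩

theorem sum_normSq_prod_erase_mul_omegaStd
    (hv : ∀ i : Fin k, fderiv ℝ (Ffun i) z v = 0) (hw : ∀ i : Fin k, fderiv ℝ (Ffun i) z w = 0) :
    (∑ m, Complex.normSq (∏ j ∈ Finset.univ.erase m, z j)) * omegaStd v w =
      (conj (fderiv ℝ psiFib z v) * fderiv ℝ psiFib z w).im := by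
  rw [omegaStd, fderiv_psiFib_apply, fderiv_psiFib_apply]
  exact sum_normSq_prod_erase_mul_sum_im_conj_mul
    (fun m _ => inner_eq_inner_zero_of_fderiv_Ffun_eq_zero hv m)
    (fun m _ => inner_eq_inner_zero_of_fderiv_Ffun_eq_zero hw m)

end Fibration

theorem stmt_9_general {k : ℕ} {z : Fin (k + 1) → ℂ} (hz : fderiv ℝ psiFib z ≠ 0) {τ : ℂ}
    {v w : Fin (k + 1) → ℂ}
    (hvF : ∀ i : Fin k, fderiv ℝ (Ffun i) z v = 0)
    (hwF : ∀ i : Fin k, fderiv ℝ (Ffun i) z w = 0)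
    (hv : ∃ s : ℝ, fderiv ℝ psiFib z v = s • τ)
    (hw : ∃ s' : ℝ, fderiv ℝ psiFib z w = s' • τ) :
    omegaStd v w = 0 := by
  obtain ⟨s, hs⟩ := hv
  obtain ⟨s', hs'⟩ := hw
  have hcollinear : (conj (s • τ) * (s' • τ)).im = 0 := by
    simp only [Complex.mul_im, Complex.conj_re, Complex.conj_im, Complex.smul_re,
      Complex.smul_im, smul_eq_mul]
    ring
  have hconformal := sum_normSq_prod_erase_mul_omegaStd hvF hwF
  rw [hs, hs', hcollinear] at hconformal
  exact (mul_eq_zero.mp hconformal).resolve_left (sum_normSq_prod_erase_pos hz).ne'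

/-- pointwise content of Proposition 1.1: at a point `z` with `ψ(z) ≠ 0`,
any two vectors annihilated by all `d(F_i)_z` and sent by `dψ_z` to real multiples of a
fixed `τ ∈ ℂ` (a tangent vector of the base loop `γ` at `ψ(z)`) are `ω`-orthogonal;
hence the torus `S_{γ,(c_1,…,c_k)}` is lagrangian in `ℂ^{k+1}`. -/
theorem stmt_9 (k : ℕ) (hk : 1 ≤ k) (z : Fin (k + 1) → ℂ) (hz : psiFib z ≠ 0) (τ : ℂ)
    (v w : Fin (k + 1) → ℂ)
    (hvF : ∀ i : Fin k, fderiv ℝ (Ffun i) z v = 0)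
    (hwF : ∀ i : Fin k, fderiv ℝ (Ffun i) z w = 0)
    (hv : ∃ s : ℝ, fderiv ℝ psiFib z v = s • τ)
    (hw : ∃ s' : ℝ, fderiv ℝ psiFib z w = s' • τ) :
    omegaStd v w = 0 := by
  exact stmt_9_general (fderiv_psiFib_ne_zero hz) hvF hwF hv hw
end
end

section
/- Fix a natural number k ≥ 1 and let Γ ⊆ ℂ with 0 ∉ Γ. Then the twist torus Θ^k(Γ) = { z ∈ ℂ^{k+1} : ∃ w ∈ Γ, ∃ θ : Fin (k+1) → ℝ with Σ_m θ m = 0 and z m = w·exp(Complex.I·θ m) for every m } equals the set { z ∈ ℂ^{k+1} : ‖z m‖ = ‖z m'‖ for all m, m', and Π_m z m ∈ { w^{k+1} : w ∈ Γ } }. (This is Proposition 1.2: the twist torus Θ^k of Chekanov–Schlenk coincides with the pseudotoric torus S_{γ₁,(0,…,0)}, where γ₁ is the image of the curve γ under the (k+1)-st power map and the values c_1 = … = c_k = 0 single out the points with all coordinates of equal modulus.) -/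
noncomputable section

/-- The twist torus `Θ^k(Γ)` over a loop `Γ ⊆ ℂ`. -/
def twistTorus (k : ℕ) (Γ : Set ℂ) : Set (Fin (k + 1) → ℂ) :=
  { z | ∃ w ∈ Γ, ∃ θ : Fin (k + 1) → ℝ,
      (∑ m, θ m) = 0 ∧ ∀ m, z m = w * Complex.exp (Complex.I * θ m) }

/-!
A point with coordinates of equal modulus whose product is `w ^ (k + 1)` has all moduli equal to
`‖w‖`, so it is `w` times a tuple of unit complex numbers with product `1`. Choosing an argument for
each of these gives angles whose sum lies in the kernel `2πℤ` of the exponential on the circle;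
subtracting this sum from a single angle makes the total vanish without moving the point.
-/

section Lifting

variable {ι A B : Type*} [Fintype ι] [AddCommGroup A] [AddCommGroup B]

theorem exists_sum_eq_zero_and_map_eq {f : A →+ B} (hf : Function.Surjective f) {b : ι → B}
    (hb : ∑ i, b i = 0) : ∃ a : ι → A, ∑ i, a i = 0 ∧ ∀ i, f (a i) = b i := by
  classical
  rcases isEmpty_or_nonempty ι with _ | ⟨⟨i₀⟩⟩
  · exact ⟨0, by simp, isEmptyElim⟩
  choose a ha using fun i => hf (b i)
  have sum_mem_ker : f (∑ i, a i) = 0 := by simp only [map_sum, ha, hb]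
  refine ⟨a - Pi.single i₀ (∑ i, a i), ?_, fun i => ?_⟩
  · simp only [Pi.sub_apply, Finset.sum_sub_distrib, Finset.sum_pi_single',
      Finset.mem_univ, if_true, sub_self]
  · rcases eq_or_ne i i₀ with rfl | hi
    · simp only [Pi.sub_apply, Pi.single_eq_same, map_sub, ha, sum_mem_ker, sub_zero]
    · simp only [Pi.sub_apply, Pi.single_eq_of_ne hi, sub_zero, ha]

end Lifting

theorem circle_coe_prod {ι : Type*} (s : Finset ι) (u : ι → Circle) :
    ((∏ i ∈ s, u i : Circle) : ℂ) = ∏ i ∈ s, (u i : ℂ) :=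
  map_prod Circle.coeHom u s

section UnitMultiples

variable {ι : Type*} [Fintype ι]

theorem prod_circle_eq_one_iff_exists_angles {u : ι → Circle} :
    ∏ i, u i = 1 ↔ ∃ θ : ι → ℝ, ∑ i, θ i = 0 ∧ ∀ i, Circle.exp (θ i) = u i := by
  constructor
  · exact fun hu => exists_sum_eq_zero_and_map_eq (f := Circle.expHom) Circle.exp_surjective hu
  · rintro ⟨θ, hθ, hu⟩
    have exp_sum : Circle.exp (∑ i, θ i) = ∏ i, Circle.exp (θ i) :=
      map_sum Circle.expHom θ Finset.univ
    rw [hθ, Circle.exp_zero] at exp_sum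
    simpa only [hu] using exp_sum.symm

theorem norm_eq_of_prod_eq_pow_card {R : Type*} [SeminormedCommRing R] [NormMulClass R]
    [NormOneClass R] {z : ι → R} {w : R} (hz : ∀ i j, ‖z i‖ = ‖z j‖)
    (hprod : ∏ i, z i = w ^ Fintype.card ι) (i : ι) : ‖z i‖ = ‖w‖ := by
  have : Nonempty ι := ⟨i⟩
  refine (pow_left_inj₀ (norm_nonneg _) (norm_nonneg _) (Fintype.card_ne_zero (α := ι))).mp ?_
  calc ‖z i‖ ^ Fintype.card ι = ∏ j, ‖z j‖ := by
        rw [← Finset.card_univ, Finset.prod_eq_pow_card fun j _ => hz j i]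
    _ = ‖w‖ ^ Fintype.card ι := by rw [← norm_prod, hprod, norm_pow]

theorem exists_circle_prod_eq_one_and_eq_mul_iff {z : ι → ℂ} {w : ℂ} :
    (∃ u : ι → Circle, ∏ i, u i = 1 ∧ ∀ i, z i = w * u i) ↔
      (∀ i j, ‖z i‖ = ‖z j‖) ∧ ∏ i, z i = w ^ Fintype.card ι := by
  constructor
  · rintro ⟨u, hu, hz⟩
    have prod_coe : ∏ i, (u i : ℂ) = 1 := by rw [← circle_coe_prod, hu, Circle.coe_one]
    refine ⟨fun i j => ?_, ?_⟩
    · simp only [hz, norm_mul, Circle.norm_coe]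
    · simp only [hz, Finset.prod_mul_distrib, prod_coe, Finset.prod_const, Finset.card_univ,
        mul_one]
  · rintro ⟨hz, hprod⟩
    have norm_eq : ∀ i, ‖z i‖ = ‖w‖ := norm_eq_of_prod_eq_pow_card hz hprod
    rcases eq_or_ne w 0 with rfl | hw
    · refine ⟨1, Finset.prod_const_one, fun i => ?_⟩
      rw [zero_mul, ← norm_eq_zero, norm_eq, norm_zero]
    have norm_div_eq_one (i : ι) : ‖z i / w‖ = 1 := by
      rw [norm_div, norm_eq, div_self (norm_ne_zero_iff.mpr hw)]
    let u (i : ι) : Circle := ⟨z i / w, mem_sphere_zero_iff_norm.mpr (norm_div_eq_one i)⟩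
    have prod_div_eq_one : ∏ i, z i / w = 1 := by
      rw [Finset.prod_div_distrib, hprod, Finset.prod_const, Finset.card_univ,
        div_self (pow_ne_zero _ hw)]
    refine ⟨u, Circle.ext ?_, fun i => (mul_div_cancel₀ (z i) hw).symm⟩
    rw [circle_coe_prod, Circle.coe_one, ← prod_div_eq_one]

end UnitMultiples

theorem mem_twistTorus_iff_exists_circle {k : ℕ} {Γ : Set ℂ} {z : Fin (k + 1) → ℂ} :
    z ∈ twistTorus k Γ ↔
      ∃ w ∈ Γ, ∃ u : Fin (k + 1) → Circle, ∏ m, u m = 1 ∧ ∀ m, z m = w * u m := by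
  have exp_I_mul (t : ℝ) : Complex.exp (Complex.I * t) = Circle.exp t := by
    rw [Circle.coe_exp, mul_comm]
  simp only [twistTorus, Set.mem_ofPred_eq, exp_I_mul]
  refine exists_congr fun w => and_congr_right fun _ => ?_
  constructor
  · rintro ⟨θ, hθ, hz⟩
    exact ⟨fun m => Circle.exp (θ m),
      prod_circle_eq_one_iff_exists_angles.mpr ⟨θ, hθ, fun _ => rfl⟩, hz⟩
  · rintro ⟨u, hu, hz⟩
    obtain ⟨θ, hθ, hexp⟩ := prod_circle_eq_one_iff_exists_angles.mp hu
    exact ⟨θ, hθ, fun m => by rw [hexp, hz]⟩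

/-- Proposition 1.2: the twist torus `Θ^k(Γ)` coincides with the
pseudotoric torus: the set of points with all coordinates of equal modulus whose
coordinate product lies in the image of `Γ` under `w ↦ w^{k+1}`. -/
theorem stmt_11 (k : ℕ) (hk : 1 ≤ k) (Γ : Set ℂ) (hΓ : (0 : ℂ) ∉ Γ) :
    twistTorus k Γ =
      { z : Fin (k + 1) → ℂ |
        (∀ m m' : Fin (k + 1), ‖z m‖ = ‖z m'‖) ∧
          (∏ m, z m) ∈ { u : ℂ | ∃ w ∈ Γ, u = w ^ (k + 1) } } := by
  ext z
  rw [mem_twistTorus_iff_exists_circle]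
  simp only [exists_circle_prod_eq_one_and_eq_mul_iff, Fintype.card_fin, Set.mem_ofPred_eq]
  constructor
  · rintro ⟨w, hw, hnorm, hprod⟩
    exact ⟨hnorm, w, hw, hprod⟩
  · rintro ⟨hnorm, w, hw, hprod⟩
    exact ⟨w, hw, hnorm, hprod⟩
end
end

section
/- Fix a natural number k ≥ 1. Let f : ℂ → ℝ be differentiable and let X_f : ℂ → ℂ satisfy, for all w, u ∈ ℂ, fderiv ℝ f w (u) = Im(conj (X_f w) * u) (X_f is the Hamiltonian vector field of f on the base ℂ). Define the lifted vector field Y : ℂ^{k+1} → ℂ^{k+1} by (Y(z)) j = conj(Π_{m ≠ j} z m) · X_f(ψ(z)). Then for every z, v ∈ ℂ^{k+1}, the real Fréchet derivative of F = f ∘ ψ at z evaluated at v equals ω(Y(z), v). That is, Y is the Hamiltonian vector field of the lifted function F = ψ* f on ℂ^{k+1}. -/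
noncomputable section

/-- The lift of a vector field `X_f` on the base `ℂ`:
`(Y z) j = conj(Π_{m ≠ j} z m) · X_f(ψ z)`. -/
def liftedField {k : ℕ} (Xf : ℂ → ℂ) (z : Fin (k + 1) → ℂ) : Fin (k + 1) → ℂ :=
  fun j => (starRingEnd ℂ) (∏ m ∈ Finset.univ.erase j, z m) * Xf (psiFib z)

/-! Fix a holomorphic `ψ : ℂⁿ → ℂ` and a point `z`. Since `L = dψ_z` is `ℂ`-linear, its Hermitian
transpose `L* ξ = (conj (∂_j ψ) · ξ)_j` is also its adjoint for the symplectic forms: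
`ω(L* ξ, v) = ω₁(ξ, L v)`. With `ξ = X_f(ψ z)` the right-hand side is `df(dψ_z v)`, which is
`d(f ∘ ψ)_z v` by the chain rule. For the product map the partial derivative `∂_j ψ` is
`∏_{m ≠ j} z_m`. -/

open scoped ComplexConjugate

theorem omegaStd_conj_apply_single_mul {n : ℕ} (L : (Fin n → ℂ) →ₗ[ℂ] ℂ) (ξ : ℂ) (v : Fin n → ℂ) :
    omegaStd (fun j => conj (L (Pi.single j 1)) * ξ) v = (conj ξ * L v).im := by
  have L_eq_sum : L v = ∑ j, v j * L (Pi.single j 1) := by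
    conv_lhs => rw [pi_eq_sum_univ' v]
    simp only [map_sum, map_smul, smul_eq_mul]
  calc omegaStd (fun j => conj (L (Pi.single j 1)) * ξ) v
      = ∑ j, (conj ξ * (v j * L (Pi.single j 1))).im := by
        simp only [omegaStd, map_mul, Complex.conj_conj]
        congr! 2 with j
        ring
    _ = (conj ξ * L v).im := by rw [← Complex.im_sum, ← Finset.mul_sum, ← L_eq_sum]

theorem hasFDerivAt_psiFib {k : ℕ} (z : Fin (k + 1) → ℂ) :
    HasFDerivAt psiFib
      (∑ j, (∏ m ∈ Finset.univ.erase j, z m) •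
        (ContinuousLinearMap.proj j : (Fin (k + 1) → ℂ) →L[ℂ] ℂ)) z :=
  hasFDerivAt_finsetProd

theorem fderiv_psiFib_single {k : ℕ} (z : Fin (k + 1) → ℂ) (j : Fin (k + 1)) :
    fderiv ℂ psiFib z (Pi.single j 1) = ∏ m ∈ Finset.univ.erase j, z m := by
  simp [(hasFDerivAt_psiFib z).fderiv, Pi.single_apply]

theorem liftedField_eq_conj_fderiv_psiFib {k : ℕ} (Xf : ℂ → ℂ) (z : Fin (k + 1) → ℂ) :
    liftedField Xf z =
      fun j => conj (fderiv ℂ psiFib z (Pi.single j 1)) * Xf (psiFib z) := by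
  funext j
  rw [fderiv_psiFib_single, liftedField]

theorem stmt_13_general {n : ℕ} {f : ℂ → ℝ} {ψ : (Fin n → ℂ) → ℂ} {z : Fin n → ℂ} {ξ : ℂ}
    (hf : DifferentiableAt ℝ f (ψ z)) (hψ : DifferentiableAt ℂ ψ z)
    (hξ : ∀ u, fderiv ℝ f (ψ z) u = (conj ξ * u).im) (v : Fin n → ℂ) :
    fderiv ℝ (f ∘ ψ) z v = omegaStd (fun j => conj (fderiv ℂ ψ z (Pi.single j 1)) * ξ) v := by
  have chain_rule : fderiv ℝ (f ∘ ψ) z v = fderiv ℝ f (ψ z) (fderiv ℂ ψ z v) := by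
    rw [(hf.hasFDerivAt.comp z (hψ.hasFDerivAt.restrictScalars ℝ)).fderiv]
    rfl
  calc fderiv ℝ (f ∘ ψ) z v
      = (conj ξ * fderiv ℂ ψ z v).im := chain_rule.trans (hξ _)
    _ = omegaStd (fun j => conj (fderiv ℂ ψ z (Pi.single j 1)) * ξ) v :=
        (omegaStd_conj_apply_single_mul (fderiv ℂ ψ z).toLinearMap ξ v).symm

/-- if `X_f` is the Hamiltonian vector field of a differentiable `f : ℂ → ℝ`
on the base (`df_w(u) = Im(conj (X_f w) · u)`), then the lifted field `Y` is the Hamiltonian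
vector field of the lifted function `F = f ∘ ψ` on `ℂ^{k+1}`. -/
theorem stmt_13 (k : ℕ) (hk : 1 ≤ k) (f : ℂ → ℝ) (hf : Differentiable ℝ f)
    (Xf : ℂ → ℂ)
    (hXf : ∀ w u : ℂ, fderiv ℝ f w u = ((starRingEnd ℂ) (Xf w) * u).im)
    (z v : Fin (k + 1) → ℂ) :
    fderiv ℝ (f ∘ psiFib) z v = omegaStd (liftedField Xf z) v := by
  rw [liftedField_eq_conj_fderiv_psiFib]
  exact stmt_13_general (hf _) (hasFDerivAt_psiFib z).differentiableAt (hXf _) v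
end
end

section
/- Fix a natural number k ≥ 1, c : Fin k → ℝ, and a compact set Γ ⊆ ℂ with 0 ∉ Γ. Let S_{Γ,c} = { z ∈ ℂ^{k+1} : Π_m z m ∈ Γ and ‖z i‖² − ‖z (i+1)‖² = c i for all i ∈ Fin k }. Then S_{Γ,c} is displaceable in ℂ^{k+1}: there exist a smooth time-dependent Hamiltonian H : ℝ × ℂ^{k+1} → ℝ and a map Φ : ℝ → ℂ^{k+1} → ℂ^{k+1}, smooth in (t, z), with Φ 0 = id, each Φ t a bijection of ℂ^{k+1}, such that for all t, z and all v ∈ ℂ^{k+1} the t-derivative ∂_t Φ t z satisfies fderiv ℝ (H t) (Φ t z) (v) = ω(∂_t Φ t z, v) (i.e. Φ is the flow of the Hamiltonian vector field of H t), and (Φ 1) '' S_{Γ,c} ∩ S_{Γ,c} = ∅. (Proposition 2.1: every torus S_{γ,(c_1,…,c_k)} is displaceable in ℂ^{k+1}.) -/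
noncomputable section

/-- The torus `S_{Γ,c}` over a set `Γ` in the base. -/
def loopTorus (k : ℕ) (Γ : Set ℂ) (c : Fin k → ℝ) : Set (Fin (k + 1) → ℂ) :=
  { z | (∏ m, z m) ∈ Γ ∧ ∀ i : Fin k, ‖z i.castSucc‖ ^ 2 - ‖z i.succ‖ ^ 2 = c i }

/-!
Unless all coordinates are small, the relations `‖z i‖² - ‖z (i + 1)‖² = c i` force every `‖z m‖`
to be at least `1`, and then each coordinate is bounded by the product of all of them. Hence
`S_{Γ,c}` is bounded as soon as `Γ` is. The translations `z ↦ t • a + z` are the flow of the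
linear Hamiltonian `ω(a, ·)`, and one of them moves a given bounded set off itself.
-/

open Bornology
open scoped Pointwise

/-- `Φ` is the Hamiltonian isotopy of `ℂ^n` generated by the time-dependent Hamiltonian `H`.
The vector field is not named: the last field is the equation `dH_t = ω(X_{H_t}, ·)` along the
flow, with `∂_t Φ` in place of `X_{H_t}`. No support condition is imposed on `H`. -/
structure IsHamiltonianIsotopy {n : ℕ} (H : ℝ → (Fin n → ℂ) → ℝ)
    (Φ : ℝ → (Fin n → ℂ) → (Fin n → ℂ)) : Prop where
  contDiff_hamiltonian : ContDiff ℝ (⊤ : ℕ∞) fun p : ℝ × (Fin n → ℂ) => H p.1 p.2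
  contDiff_flow : ContDiff ℝ (⊤ : ℕ∞) fun p : ℝ × (Fin n → ℂ) => Φ p.1 p.2
  flow_zero : Φ 0 = id
  bijective (t : ℝ) : Function.Bijective (Φ t)
  fderiv_hamiltonian (t : ℝ) (z v : Fin n → ℂ) :
    fderiv ℝ (H t) (Φ t z) v = omegaStd (deriv (fun s : ℝ => Φ s z) t) v

/-- A subset of `ℂ^n` is displaceable if the time-one map of some Hamiltonian isotopy moves it
off itself. The notion is stated for arbitrary sets, compact or not. -/
def IsDisplaceable {n : ℕ} (s : Set (Fin n → ℂ)) : Prop :=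
  ∃ (H : ℝ → (Fin n → ℂ) → ℝ) (Φ : ℝ → (Fin n → ℂ) → (Fin n → ℂ)),
    IsHamiltonianIsotopy H Φ ∧ Disjoint (Φ 1 '' s) s

section Translation

variable {n : ℕ}

theorem isBoundedLinearMap_omegaStd (a : Fin n → ℂ) : IsBoundedLinearMap ℝ (omegaStd a) :=
  (LinearMap.toContinuousLinearMap
    { toFun := omegaStd a
      map_add' := fun v w => by
        simp only [omegaStd, Pi.add_apply, mul_add, Complex.add_im, Finset.sum_add_distrib]
      map_smul' := fun r v => by
        simp only [omegaStd, Pi.smul_apply, mul_smul_comm, Complex.smul_im, Finset.smul_sum,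
          RingHom.id_apply] }).isBoundedLinearMap

theorem isHamiltonianIsotopy_translation (a : Fin n → ℂ) :
    IsHamiltonianIsotopy (fun _ => omegaStd a) fun t z => t • a + z where
  contDiff_hamiltonian := (isBoundedLinearMap_omegaStd a).contDiff.comp contDiff_snd
  contDiff_flow := by fun_prop
  flow_zero := by ext; simp
  bijective t := (Equiv.addLeft (t • a)).bijective
  fderiv_hamiltonian t z v := by
    have hderiv : HasDerivAt (fun s : ℝ => s • a + z) a t := by
      simpa using ((hasDerivAt_id t).smul_const a).add_const z
    rw [(isBoundedLinearMap_omegaStd a).fderiv, hderiv.deriv]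
    rfl

theorem isDisplaceable_of_disjoint_vadd {s : Set (Fin n → ℂ)} {a : Fin n → ℂ}
    (h : Disjoint (a +ᵥ s) s) : IsDisplaceable s :=
  ⟨_, _, isHamiltonianIsotopy_translation a, by simpa [← Set.image_vadd] using h⟩

theorem isDisplaceable_of_isBounded [NeZero n] {s : Set (Fin n → ℂ)} (hs : IsBounded s) :
    IsDisplaceable s := by
  have : NoncompactSpace (Fin n → ℂ) := NormedSpace.noncompactSpace ℝ _
  obtain ⟨a, ha⟩ := exists_disjoint_vadd_of_isCompact hs.isCompact_closure hs.isCompact_closure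
  exact isDisplaceable_of_disjoint_vadd <|
    (ha.mono subset_closure (Set.vadd_set_mono subset_closure)).symm

end Translation

section Boundedness

theorem norm_le_max_norm_prod_of_norm_sq_sub_le {ι 𝕜 : Type*} [Fintype ι] [NormedField 𝕜]
    {z : ι → 𝕜} {i : ι} {C : ℝ} (h : ∀ j, ‖z i‖ ^ 2 - ‖z j‖ ^ 2 ≤ C) :
    ‖z i‖ ≤ max ‖∏ j, z j‖ (1 + C) := by
  classical
  refine le_max_iff.mpr (or_iff_not_imp_right.mpr fun hi => ?_)
  have hC : 0 ≤ C := by simpa using h i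
  have one_le_norm (j : ι) : 1 ≤ ‖z j‖ :=
    (one_le_sq_iff₀ (norm_nonneg _)).mp (by nlinarith [h j])
  rw [norm_prod, ← Finset.mul_prod_erase _ _ (Finset.mem_univ i)]
  exact le_mul_of_one_le_right (norm_nonneg _) (Finset.one_le_prod fun j _ => one_le_norm j)

variable {k : ℕ} {c : Fin k → ℝ} {Γ : Set ℂ}

theorem norm_sq_add_partialSum_of_mem_loopTorus {z : Fin (k + 1) → ℂ} (hz : z ∈ loopTorus k Γ c)
    (m : Fin (k + 1)) : ‖z m‖ ^ 2 + Fin.partialSum c m = ‖z 0‖ ^ 2 := by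
  induction m using Fin.induction with
  | zero => simp
  | succ i ih => rw [Fin.partialSum_succ]; linarith [hz.2 i]

theorem isBounded_loopTorus (hΓ : IsBounded Γ) : IsBounded (loopTorus k Γ c) := by
  obtain ⟨M, hM⟩ := hΓ.exists_norm_le
  obtain ⟨C, hC⟩ := (Set.finite_range fun p : Fin (k + 1) × Fin (k + 1) =>
    Fin.partialSum c p.1 - Fin.partialSum c p.2).bddAbove
  refine isBounded_iff_forall_norm_le.mpr ⟨max M (1 + C), fun z hz => ?_⟩
  have norm_sq_sub_le (i j : Fin (k + 1)) : ‖z i‖ ^ 2 - ‖z j‖ ^ 2 ≤ C := by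
    have := hC (Set.mem_range_self (j, i))
    linarith [norm_sq_add_partialSum_of_mem_loopTorus hz i,
      norm_sq_add_partialSum_of_mem_loopTorus hz j]
  exact (pi_norm_le_iff_of_nonempty z).mpr fun i =>
    (norm_le_max_norm_prod_of_norm_sq_sub_le (norm_sq_sub_le i)).trans
      (max_le_max_right _ (hM _ hz.1))

end Boundedness

theorem stmt_17_general (k : ℕ) (c : Fin k → ℝ) {Γ : Set ℂ} (hΓ : IsBounded Γ) :
    IsDisplaceable (loopTorus k Γ c) :=
  isDisplaceable_of_isBounded (isBounded_loopTorus hΓ)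

/-- Proposition 2.1: every torus `S_{Γ,c}` is displaceable in `ℂ^{k+1}`:
there is a Hamiltonian isotopy `Φ` (the flow of the Hamiltonian vector field of a smooth
time-dependent Hamiltonian `H`, with respect to the standard symplectic form) whose
time-one map moves `S_{Γ,c}` off itself. -/
theorem stmt_17 (k : ℕ) (hk : 1 ≤ k) (c : Fin k → ℝ) (Γ : Set ℂ)
    (hΓc : IsCompact Γ) (hΓ : (0 : ℂ) ∉ Γ) :
    ∃ (H : ℝ → (Fin (k + 1) → ℂ) → ℝ)
      (Φ : ℝ → (Fin (k + 1) → ℂ) → (Fin (k + 1) → ℂ)),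
      ContDiff ℝ (⊤ : ℕ∞) (fun p : ℝ × (Fin (k + 1) → ℂ) => H p.1 p.2) ∧
      ContDiff ℝ (⊤ : ℕ∞) (fun p : ℝ × (Fin (k + 1) → ℂ) => Φ p.1 p.2) ∧
      Φ 0 = id ∧
      (∀ t : ℝ, Function.Bijective (Φ t)) ∧
      (∀ (t : ℝ) (z v : Fin (k + 1) → ℂ),
        fderiv ℝ (H t) (Φ t z) v = omegaStd (deriv (fun s : ℝ => Φ s z) t) v) ∧
      Φ 1 '' loopTorus k Γ c ∩ loopTorus k Γ c = ∅ := by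
  obtain ⟨H, Φ, hΦ, hdisj⟩ := stmt_17_general k c hΓc.isBounded
  exact ⟨H, Φ, hΦ.contDiff_hamiltonian, hΦ.contDiff_flow, hΦ.flow_zero, hΦ.bijective,
    hΦ.fderiv_hamiltonian, hdisj.inter_eq⟩
end
end
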